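/- Assume the ground truth reward r_G satisfies the reward structure assumption, the initial parameters θ_0 satisfy the initial policy assumption (general-features case), the feature vectors satisfy the positive-inner-product feature assumption, and ‖φ(y_med)‖² < s < ‖φ(y_⋆)‖² < 100‖φ(y_med)‖². Let r_P be identical to r_G except r_P(y_med) ≤ min_{y∈Y_bad} r_G(y). If θ_t is the gradient flow maximizing V_P and s > [π_{θ_0}(y_⋆) A_P(y_⋆; θ_0) ‖φ(y_⋆)‖² − π_{θ_0}(y_med) A_P(y_med; θ_0) ‖φ(y_med)‖²] / [π_{θ_0}(y_⋆) A_P(y_⋆; θ_0) − π_{θ_0}(y_med) A_P(y_med; θ_0)], then V_G(θ_t) < r_G(y_⋆) − (r_G(y_⋆) − r_G(y_med)) · π_{θ_0}(y_med) for all t ≥ 0. -/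

import Mathlib

open scoped BigOperators RealInnerProductSpace

noncomputable def policy {Y : Type*} [Fintype Y] {D : ℕ}
    (φ : Y → EuclideanSpace ℝ (Fin D)) (θ : EuclideanSpace ℝ (Fin D)) (y : Y) : ℝ :=
  Real.exp ⟪φ y, θ⟫ / ∑ z, Real.exp ⟪φ z, θ⟫

noncomputable def expReward {Y : Type*} [Fintype Y] {D : ℕ}
    (φ : Y → EuclideanSpace ℝ (Fin D)) (r : Y → ℝ) (θ : EuclideanSpace ℝ (Fin D)) : ℝ :=
  ∑ y, policy φ θ y * r y

/-!
Write `R` and `m` for the largest and smallest proxy rewards, taken at `ystar` and `ymed`, `V` for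
the expected proxy reward, and `d = φ ystar - φ ymed`. Only `ystar` and `ymed` have features that
are not orthogonal to `d`, so under gradient flow the log odds `w = ⟪d, θ⟫` of `ystar` against
`ymed` satisfy `w' = π(ymed) * g` with
`g = exp w * (R - V) * ⟪φ ystar, d⟫ - (V - m) * ⟪φ ymed, d⟫`, and the lower bound on `s` says that
`g < 0` at time zero. While `g < 0`, `w` decreases and `V` increases, so `g` decreases: its sign
persists and the odds never exceed their initial value. If `π_t(ystar) ≥ 1 - π_0(ymed)`, then,
since other outputs have positive probability, `π_t(ystar) > π_0(ystar)` and
`π_t(ymed) < π_0(ymed)`, so the odds would have grown.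
-/

section Calculus

theorem le_initial_of_deriv_neg_of_neg {g : ℝ → ℝ} {a t : ℝ}
    (hg : ∀ x, a ≤ x → DifferentiableAt ℝ g x) (hg' : ∀ x, a ≤ x → g x < 0 → deriv g x < 0)
    (ha : g a < 0) (ht : a ≤ t) : g t ≤ g a :=
  image_le_of_deriv_right_lt_deriv_boundary (B := fun _ => g a)
    (fun x hx => (hg x hx.1).continuousAt.continuousWithinAt)
    (fun x hx => (hg x hx.1).hasDerivAt.hasDerivWithinAt) le_rfl
    (fun x => hasDerivAt_const x (g a)) (fun x hx hxa => hg' x hx.1 (hxa.trans_lt ha)) ⟨ht, le_rfl⟩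

variable {E : Type*} [NormedAddCommGroup E] [InnerProductSpace ℝ E] {θ : ℝ → E} {t : ℝ}

theorem hasDerivAt_inner_const_left {v : E} (a : E) (hθ : HasDerivAt θ v t) :
    HasDerivAt (fun u => ⟪a, θ u⟫) ⟪v, a⟫ t := by
  rw [real_inner_comm]
  exact (innerSL ℝ a).hasFDerivAt.comp_hasDerivAt t hθ

theorem hasDerivAt_comp_gradientFlow [CompleteSpace E] {f : E → ℝ}
    (hf : DifferentiableAt ℝ f (θ t)) (hθ : HasDerivAt θ (gradient f (θ t)) t) :
    HasDerivAt (fun u => f (θ u)) (‖gradient f (θ t)‖ ^ 2) t := by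
  have h := hf.hasGradientAt.hasFDerivAt.comp_hasDerivAt t hθ
  rwa [InnerProductSpace.toDual_apply_apply, real_inner_self_eq_norm_sq] at h

end Calculus

section Policy

variable {Y : Type*} [Fintype Y] {D : ℕ} (φ : Y → EuclideanSpace ℝ (Fin D))
  (θ : EuclideanSpace ℝ (Fin D))

theorem sum_exp_inner_pos [Nonempty Y] : 0 < ∑ z, Real.exp ⟪φ z, θ⟫ :=
  Finset.sum_pos (fun _ _ => Real.exp_pos _) Finset.univ_nonempty

theorem policy_pos (y : Y) : 0 < policy φ θ y :=
  have : Nonempty Y := ⟨y⟩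
  div_pos (Real.exp_pos _) (sum_exp_inner_pos φ θ)

theorem sum_policy [Nonempty Y] : ∑ y, policy φ θ y = 1 := by
  simp only [policy]
  rw [← Finset.sum_div, div_self (sum_exp_inner_pos φ θ).ne']

theorem policy_div_policy (y z : Y) :
    policy φ θ y / policy φ θ z = Real.exp ⟪φ y - φ z, θ⟫ := by
  have : Nonempty Y := ⟨y⟩
  rw [policy, policy, div_div_div_cancel_right₀ (sum_exp_inner_pos φ θ).ne', ← Real.exp_sub,
    ← inner_sub_left]

theorem policy_add_policy_lt_one {y z w : Y} (hyz : y ≠ z) (hwy : w ≠ y) (hwz : w ≠ z) :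
    policy φ θ y + policy φ θ z < 1 := by
  classical
  have : Nonempty Y := ⟨y⟩
  rw [← sum_policy φ θ, ← Finset.sum_pair hyz]
  exact Finset.sum_lt_sum_of_subset (Finset.subset_univ _) (Finset.mem_univ w)
    (by simp [hwy, hwz]) (policy_pos φ θ w) fun x _ _ => (policy_pos φ θ x).le

theorem add_policy_lt_one_of_odds_le {θ₀ : EuclideanSpace ℝ (Fin D)} {y z w : Y} (hyz : y ≠ z)
    (hwy : w ≠ y) (hwz : w ≠ z)
    (hodds : policy φ θ y / policy φ θ z ≤ policy φ θ₀ y / policy φ θ₀ z) :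
    policy φ θ y + policy φ θ₀ z < 1 := by
  by_contra! h
  have hy : policy φ θ₀ y < policy φ θ y := by
    linarith [policy_add_policy_lt_one φ θ₀ hyz hwy hwz]
  have hz : policy φ θ z < policy φ θ₀ z := by
    linarith [policy_add_policy_lt_one φ θ hyz hwy hwz]
  exact hodds.not_gt (div_lt_div₀ hy hz.le (policy_pos φ θ y).le (policy_pos φ θ z))

end Policy

section ExpReward

variable {Y : Type*} [Fintype Y] {D : ℕ} (φ : Y → EuclideanSpace ℝ (Fin D)) {r : Y → ℝ}
  (θ : EuclideanSpace ℝ (Fin D))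

theorem lt_expReward {m : ℝ} {y : Y} (hm : ∀ w, m ≤ r w) (hy : m < r y) :
    m < expReward φ r θ := by
  have : Nonempty Y := ⟨y⟩
  calc m = ∑ w, policy φ θ w * m := by rw [← Finset.sum_mul, sum_policy, one_mul]
    _ < expReward φ r θ := Finset.sum_lt_sum
      (fun w _ => mul_le_mul_of_nonneg_left (hm w) (policy_pos φ θ w).le)
      ⟨y, Finset.mem_univ y, mul_lt_mul_of_pos_left hy (policy_pos φ θ y)⟩

theorem expReward_lt {R : ℝ} {y : Y} (hR : ∀ w, r w ≤ R) (hy : r y < R) :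
    expReward φ r θ < R := by
  have : Nonempty Y := ⟨y⟩
  calc expReward φ r θ
      < ∑ w, policy φ θ w * R := Finset.sum_lt_sum (f := fun w => policy φ θ w * r w)
        (fun w _ => mul_le_mul_of_nonneg_left (hR w) (policy_pos φ θ w).le)
        ⟨y, Finset.mem_univ y, mul_lt_mul_of_pos_left hy (policy_pos φ θ y)⟩
    _ = R := by rw [← Finset.sum_mul, sum_policy, one_mul]

theorem expReward_le_of_forall_ne {c : ℝ} {y : Y} (hc : ∀ w, w ≠ y → r w ≤ c) :
    expReward φ r θ ≤ policy φ θ y * r y + (1 - policy φ θ y) * c := by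
  classical
  have : Nonempty Y := ⟨y⟩
  rw [expReward, Fintype.sum_eq_add_sum_compl y, ← sum_policy φ θ,
    Fintype.sum_eq_add_sum_compl y (policy φ θ), add_sub_cancel_left, Finset.sum_mul]
  gcongr with w hw
  · exact (policy_pos φ θ w).le
  · exact hc w (by simpa using hw)

end ExpReward

section Gradient

variable {Y : Type*} [Fintype Y] {D : ℕ} (φ : Y → EuclideanSpace ℝ (Fin D))
  (θ : EuclideanSpace ℝ (Fin D))

theorem hasGradientAt_log_sum_exp_inner [Nonempty Y] :
    HasGradientAt (fun ϑ => Real.log (∑ z, Real.exp ⟪φ z, ϑ⟫)) (∑ z, policy φ θ z • φ z) θ := by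
  have hexp (z : Y) : HasFDerivAt (fun ϑ => Real.exp ⟪φ z, ϑ⟫)
      (Real.exp ⟪φ z, θ⟫ • InnerProductSpace.toDual ℝ _ (φ z)) θ :=
    (InnerProductSpace.toDual ℝ _ (φ z)).hasFDerivAt.exp
  refine ((HasFDerivAt.fun_sum fun z _ => hexp z).log (sum_exp_inner_pos φ θ).ne').congr_fderiv ?_
  simp [policy, Finset.smul_sum, smul_smul, div_eq_inv_mul]

theorem hasGradientAt_policy (y : Y) :
    HasGradientAt (fun ϑ => policy φ ϑ y)
      (policy φ θ y • (φ y - ∑ z, policy φ θ z • φ z)) θ := by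
  have : Nonempty Y := ⟨y⟩
  have hexp (ϑ : EuclideanSpace ℝ (Fin D)) : policy φ ϑ y
      = Real.exp (⟪φ y, ϑ⟫ - Real.log (∑ z, Real.exp ⟪φ z, ϑ⟫)) := by
    rw [Real.exp_sub, Real.exp_log (sum_exp_inner_pos φ ϑ), policy]
  have hlog := (hasGradientAt_log_sum_exp_inner φ θ).hasFDerivAt
  refine (((InnerProductSpace.toDual ℝ _ (φ y)).hasFDerivAt.sub hlog).exp.congr_fderiv ?_
    ).congr_of_eventuallyEq (.of_forall hexp)
  simp [hexp, smul_sub]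

theorem hasGradientAt_expReward (r : Y → ℝ) :
    HasGradientAt (expReward φ r)
      (∑ y, (policy φ θ y * (r y - expReward φ r θ)) • φ y) θ := by
  refine (HasFDerivAt.fun_sum fun y _ =>
    (hasGradientAt_policy φ θ y).hasFDerivAt.mul_const (r y)).congr_fderiv ?_
  have hmean : ∑ y, (policy φ θ y * expReward φ r θ) • φ y
      = ∑ y, (policy φ θ y * r y) • ∑ z, policy φ θ z • φ z := by
    rw [← Finset.sum_smul, Finset.smul_sum]
    simp only [smul_smul, expReward, mul_comm]
  simp only [mul_sub, sub_smul, Finset.sum_sub_distrib, hmean]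
  simp only [← Finset.sum_sub_distrib, ← smul_sub, map_sum, smul_smul, map_smulₛₗ, mul_comm,
    starRingEnd_apply, star_trivial]

theorem inner_gradient_expReward (r : Y → ℝ) (v : EuclideanSpace ℝ (Fin D)) :
    ⟪gradient (expReward φ r) θ, v⟫
      = ∑ y, policy φ θ y * (r y - expReward φ r θ) * ⟪φ y, v⟫ := by
  simp only [(hasGradientAt_expReward φ θ r).gradient, sum_inner, real_inner_smul_left]

end Gradient

section OddsDrift

variable {Y : Type*} [Fintype Y] {D : ℕ} {φ : Y → EuclideanSpace ℝ (Fin D)} {r : Y → ℝ}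
  {y z : Y}

/-- The derivative of the log odds of `y` against `z` along the gradient flow of `expReward φ r`,
divided by `policy φ θ z`, when all other features are orthogonal to `φ y - φ z`. After the
division, `θ` enters only through the log odds and the expected reward, whose derivatives along
the flow have known signs. -/
noncomputable def oddsDrift (φ : Y → EuclideanSpace ℝ (Fin D)) (r : Y → ℝ) (y z : Y)
    (θ : EuclideanSpace ℝ (Fin D)) : ℝ :=
  Real.exp ⟪φ y - φ z, θ⟫ * ((r y - expReward φ r θ) * ⟪φ y, φ y - φ z⟫)
    - (expReward φ r θ - r z) * ⟪φ z, φ y - φ z⟫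

theorem inner_gradient_sub_of_orthogonal
    (horth : ∀ w, w ≠ y → w ≠ z → ⟪φ w, φ y - φ z⟫ = 0) (θ : EuclideanSpace ℝ (Fin D)) :
    ⟪gradient (expReward φ r) θ, φ y - φ z⟫
      = policy φ θ y * (r y - expReward φ r θ) * ⟪φ y, φ y - φ z⟫
        + policy φ θ z * (r z - expReward φ r θ) * ⟪φ z, φ y - φ z⟫ := by
  rw [inner_gradient_expReward]
  rcases eq_or_ne y z with rfl | hyz
  · simp
  · exact Fintype.sum_eq_add y z hyz fun w hw => by rw [horth w hw.1 hw.2, mul_zero]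

theorem inner_gradient_sub_eq_policy_mul_oddsDrift
    (horth : ∀ w, w ≠ y → w ≠ z → ⟪φ w, φ y - φ z⟫ = 0) (θ : EuclideanSpace ℝ (Fin D)) :
    ⟪gradient (expReward φ r) θ, φ y - φ z⟫ = policy φ θ z * oddsDrift φ r y z θ := by
  rw [inner_gradient_sub_of_orthogonal horth, oddsDrift, ← policy_div_policy]
  field [(policy_pos φ θ z).ne']

theorem inner_gradient_sub_neg_iff
    (horth : ∀ w, w ≠ y → w ≠ z → ⟪φ w, φ y - φ z⟫ = 0) (hmin : ∀ w, r z ≤ r w)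
    (hmax : ∀ w, r w ≤ r y) (hlt : r z < r y) (θ : EuclideanSpace ℝ (Fin D)) :
    ⟪gradient (expReward φ r) θ, φ y - φ z⟫ < 0 ↔
      (policy φ θ y * (r y - expReward φ r θ) * ‖φ y‖ ^ 2
          - policy φ θ z * (r z - expReward φ r θ) * ‖φ z‖ ^ 2)
        / (policy φ θ y * (r y - expReward φ r θ) - policy φ θ z * (r z - expReward φ r θ))
        < ⟪φ y, φ z⟫ := by
  have hy := mul_pos (policy_pos φ θ y) (sub_pos.2 (expReward_lt φ θ hmax hlt))
  have hz := mul_neg_of_pos_of_neg (policy_pos φ θ z) (sub_neg.2 (lt_expReward φ θ hmin hlt))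
  rw [div_lt_iff₀ (by linarith), inner_gradient_sub_of_orthogonal horth, inner_sub_right,
    inner_sub_right, real_inner_self_eq_norm_sq, real_inner_self_eq_norm_sq,
    real_inner_comm (φ y) (φ z)]
  constructor <;> intro h <;> linarith

variable {θ : ℝ → EuclideanSpace ℝ (Fin D)}

theorem hasDerivAt_oddsDrift {t : ℝ} (hθ : HasDerivAt θ (gradient (expReward φ r) (θ t)) t) :
    HasDerivAt (fun u => oddsDrift φ r y z (θ u))
      (Real.exp ⟪φ y - φ z, θ t⟫ * ((r y - expReward φ r (θ t)) * ⟪φ y, φ y - φ z⟫)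
          * ⟪gradient (expReward φ r) (θ t), φ y - φ z⟫
        - ‖gradient (expReward φ r) (θ t)‖ ^ 2
          * (Real.exp ⟪φ y - φ z, θ t⟫ * ⟪φ y, φ y - φ z⟫ + ⟪φ z, φ y - φ z⟫)) t := by
  have hV := hasDerivAt_comp_gradientFlow (hasGradientAt_expReward φ (θ t) r).differentiableAt hθ
  have hodds := (hasDerivAt_inner_const_left (φ y - φ z) hθ).exp
  refine ((hodds.mul ((hV.const_sub (r y)).mul_const _)).sub
    ((hV.sub_const (r z)).mul_const _)).congr_deriv ?_
  ring

theorem deriv_oddsDrift_neg (horth : ∀ w, w ≠ y → w ≠ z → ⟪φ w, φ y - φ z⟫ = 0)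
    (hmin : ∀ w, r z ≤ r w) (hmax : ∀ w, r w ≤ r y) (hlt : r z < r y)
    (hself : 0 < ⟪φ y, φ y - φ z⟫) {t : ℝ}
    (hθ : HasDerivAt θ (gradient (expReward φ r) (θ t)) t) (hneg : oddsDrift φ r y z (θ t) < 0) :
    deriv (fun u => oddsDrift φ r y z (θ u)) t < 0 := by
  rw [(hasDerivAt_oddsDrift hθ).deriv]
  have hgain : 0 <
      Real.exp ⟪φ y - φ z, θ t⟫ * ((r y - expReward φ r (θ t)) * ⟪φ y, φ y - φ z⟫) :=
    mul_pos (Real.exp_pos _) (mul_pos (sub_pos.2 (expReward_lt φ (θ t) hmax hlt)) hself)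
  have hcross : 0 < ⟪φ z, φ y - φ z⟫ := by
    refine pos_of_mul_pos_right ?_ (sub_pos.2 (lt_expReward φ (θ t) hmin hlt)).le
    rw [oddsDrift] at hneg
    linarith
  have hslope : ⟪gradient (expReward φ r) (θ t), φ y - φ z⟫ < 0 := by
    rw [inner_gradient_sub_eq_policy_mul_oddsDrift horth]
    exact mul_neg_of_pos_of_neg (policy_pos φ (θ t) z) hneg
  exact sub_neg_of_lt ((mul_neg_of_pos_of_neg hgain hslope).trans_le (by positivity))

theorem antitoneOn_odds_of_gradientFlow (horth : ∀ w, w ≠ y → w ≠ z → ⟪φ w, φ y - φ z⟫ = 0)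
    (hmin : ∀ w, r z ≤ r w) (hmax : ∀ w, r w ≤ r y) (hlt : r z < r y)
    (hself : 0 < ⟪φ y, φ y - φ z⟫)
    (hθ : ∀ t, 0 ≤ t → HasDerivAt θ (gradient (expReward φ r) (θ t)) t)
    (h0 : ⟪gradient (expReward φ r) (θ 0), φ y - φ z⟫ < 0) :
    AntitoneOn (fun t => policy φ (θ t) y / policy φ (θ t) z) (Set.Ici 0) := by
  have hdrift0 : oddsDrift φ r y z (θ 0) < 0 := by
    rw [inner_gradient_sub_eq_policy_mul_oddsDrift horth] at h0
    exact neg_of_mul_neg_right h0 (policy_pos φ (θ 0) z).le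
  have hdrift (t : ℝ) (ht : 0 ≤ t) : oddsDrift φ r y z (θ t) < 0 :=
    (le_initial_of_deriv_neg_of_neg (fun x hx => (hasDerivAt_oddsDrift (hθ x hx)).differentiableAt)
      (fun x hx => deriv_oddsDrift_neg horth hmin hmax hlt hself (hθ x hx)) hdrift0 ht).trans_lt
      hdrift0
  have hlogOdds (t : ℝ) (ht : 0 ≤ t) := hasDerivAt_inner_const_left (φ y - φ z) (hθ t ht)
  simp only [policy_div_policy]
  refine Real.exp_monotone.comp_antitoneOn (antitoneOn_of_hasDerivWithinAt_nonpos (convex_Ici 0)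
    (fun t ht => (hlogOdds t ht).continuousAt.continuousWithinAt)
    (fun t ht => (hlogOdds t (interior_subset ht)).hasDerivWithinAt) fun t ht => ?_)
  rw [inner_gradient_sub_eq_policy_mul_oddsDrift horth]
  exact mul_nonpos_of_nonneg_of_nonpos (policy_pos φ (θ t) z).le
    (hdrift t (interior_subset ht)).le

end OddsDrift

theorem pos_inner_stuck_general {Y : Type*} [Fintype Y] {D : ℕ}
    (φ : Y → EuclideanSpace ℝ (Fin D)) (rG rP : Y → ℝ) (ystar ymed ybad : Y)
    (hbs : ybad ≠ ystar) (hbm : ybad ≠ ymed)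
    (hrG : rG ymed < rG ystar) (hrG_le : ∀ y, y ≠ ystar → rG y ≤ rG ymed)
    (hrP : rP ymed < rP ystar) (hrP_min : ∀ y, rP ymed ≤ rP y) (hrP_max : ∀ y, rP y ≤ rP ystar)
    (horth : ∀ y, y ≠ ystar → y ≠ ymed → ⟪φ y, φ ystar - φ ymed⟫ = 0)
    (hinner : ⟪φ ystar, φ ymed⟫ < ‖φ ystar‖ ^ 2)
    (θt : ℝ → EuclideanSpace ℝ (Fin D))
    (hflow : ∀ t : ℝ, 0 ≤ t → HasDerivAt θt (gradient (expReward φ rP) (θt t)) t)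
    (hgrad : ⟪gradient (expReward φ rP) (θt 0), φ ystar - φ ymed⟫ < 0) (t : ℝ) (ht : 0 ≤ t) :
    expReward φ rG (θt t) < rG ystar - (rG ystar - rG ymed) * policy φ (θt 0) ymed := by
  have hself : 0 < ⟪φ ystar, φ ystar - φ ymed⟫ := by
    rwa [inner_sub_right, real_inner_self_eq_norm_sq, sub_pos]
  have hodds := antitoneOn_odds_of_gradientFlow horth hrP_min hrP_max hrP hself hflow hgrad
    Set.self_mem_Ici ht ht
  have hstar := add_policy_lt_one_of_odds_le φ (θt t) (ne_of_apply_ne rG hrG.ne') hbs hbm hodds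
  calc expReward φ rG (θt t)
      ≤ policy φ (θt t) ystar * rG ystar + (1 - policy φ (θt t) ystar) * rG ymed :=
        expReward_le_of_forall_ne φ (θt t) hrG_le
    _ = rG ystar - (rG ystar - rG ymed) * (1 - policy φ (θt t) ystar) := by ring
    _ < rG ystar - (rG ystar - rG ymed) * policy φ (θt 0) ymed :=
        sub_lt_sub_left (mul_lt_mul_of_pos_left (by linarith) (sub_pos.2 hrG)) _

theorem pos_inner_stuck {Y : Type*} [Fintype Y] {D : ℕ}
    (φ : Y → EuclideanSpace ℝ (Fin D)) (hφ : ∀ y, φ y ≠ 0)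
    (rG : Y → ℝ) (hrG : ∀ y, rG y ∈ Set.Icc (-1 : ℝ) 1)
    (ystar ymed ybad : Y) (Ybad : Finset Y) (hybad : ybad ∈ Ybad)
    (hsm : ystar ≠ ymed) (hsb : ystar ∉ Ybad) (hmb : ymed ∉ Ybad)
    (hcover : ∀ y : Y, y = ystar ∨ y = ymed ∨ y ∈ Ybad)
    (hr1 : rG ymed < rG ystar) (hr2 : 0 < rG ymed)
    (hr3 : ∀ y ∈ Ybad, rG y ≤ 0)
    (hr4 : ∀ y ∈ Ybad, rG y = rG ybad)
    (Δ1 Δ2 : ℝ) (hΔ1 : Δ1 = rG ystar - rG ymed) (hΔ2 : Δ2 = rG ymed - rG ybad)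
    (s : ℝ) (hs : s = ⟪φ ystar, φ ymed⟫) (hspos : 0 < s)
    (horthbad : ∀ yb ∈ Ybad, ∀ y : Y, y ≠ yb → ⟪φ yb, φ y⟫ = 0)
    (rP : Y → ℝ) (hrP : ∀ y, rP y ∈ Set.Icc (-1 : ℝ) 1)
    (hrPeq : ∀ y : Y, y ≠ ymed → rP y = rG y)
    (hrPmed : rP ymed ≤ Finset.inf' Ybad ⟨ybad, hybad⟩ rG)
    (θt : ℝ → EuclideanSpace ℝ (Fin D))
    (hflow : ∀ t : ℝ, 0 ≤ t → HasDerivAt θt (gradient (expReward φ rP) (θt t)) t)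
    (B M' : ℝ)
    (hB : B = Finset.univ.sup' ⟨ystar, Finset.mem_univ ystar⟩ fun y => ‖φ y‖)
    (hM' : M' = min 1 (‖φ ymed‖ ^ 2 * rG ymed ^ ((2:ℝ)/7) / (40 * B ^ 2 * (Δ1 + Δ2))))
    (hinit1 : policy φ (θt 0) ystar
        < min (M' * (min 0.01 ((21 * ‖φ ymed‖ ^ 2 / (1100 * B ^ 2 * (Δ1 + Δ2))) ^ ((7:ℝ)/3))) ^ ((13:ℝ)/14))
            (‖φ ymed‖ / ‖φ ystar‖ * policy φ (θt 0) ymed))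
    (hinit2 : max (2 * policy φ (θt 0) ystar ^ ((7:ℝ)/13) / (Δ2 * M' ^ ((7:ℝ)/13)))
        (0.05 * rG ymed) ≤ ∑ y ∈ Ybad, policy φ (θt 0) y)
    (hinit3 : ∑ y ∈ Ybad, policy φ (θt 0) y ≤ 0.1 * rG ymed)
    (hchain1 : ‖φ ymed‖ ^ 2 < s) (hchain2 : s < ‖φ ystar‖ ^ 2)
    (hchain3 : ‖φ ystar‖ ^ 2 < 100 * ‖φ ymed‖ ^ 2)
    (hscond : (policy φ (θt 0) ystar * (rP ystar - expReward φ rP (θt 0)) * ‖φ ystar‖ ^ 2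
          - policy φ (θt 0) ymed * (rP ymed - expReward φ rP (θt 0)) * ‖φ ymed‖ ^ 2)
        / (policy φ (θt 0) ystar * (rP ystar - expReward φ rP (θt 0))
          - policy φ (θt 0) ymed * (rP ymed - expReward φ rP (θt 0))) < s) :
    ∀ t : ℝ, 0 ≤ t →
      expReward φ rG (θt t)
        < rG ystar - (rG ystar - rG ymed) * policy φ (θt 0) ymed := by
  have hbad (y : Y) (hy : y ≠ ystar) (hy' : y ≠ ymed) : y ∈ Ybad :=
    ((hcover y).resolve_left hy).resolve_left hy'
  have hrP_bad (y : Y) (hy : y ∈ Ybad) : rP y = rG y := hrPeq y (ne_of_mem_of_not_mem hy hmb)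
  have hrP_le (y : Y) (hy : y ∈ Ybad) : rP ymed ≤ rP y :=
    (hrPmed.trans (Finset.inf'_le _ hy)).trans_eq (hrP_bad y hy).symm
  have hbad_lt (y : Y) (hy : y ∈ Ybad) : rP y < rP ystar := by
    linarith [hr3 y hy, hrP_bad y hy, hrPeq ystar hsm]
  have hlt : rP ymed < rP ystar := (hrP_le ybad hybad).trans_lt (hbad_lt ybad hybad)
  have hmin (y : Y) : rP ymed ≤ rP y := by
    rcases hcover y with rfl | rfl | hy
    exacts [hlt.le, le_rfl, hrP_le y hy]
  have hmax (y : Y) : rP y ≤ rP ystar := by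
    rcases hcover y with rfl | rfl | hy
    exacts [le_rfl, hlt.le, (hbad_lt y hy).le]
  have hrG_le (y : Y) (hy : y ≠ ystar) : rG y ≤ rG ymed := by
    rcases hcover y with h | rfl | hy'
    exacts [absurd h hy, le_rfl, (hr3 y hy').trans hr2.le]
  have horth (y : Y) (hy : y ≠ ystar) (hy' : y ≠ ymed) : ⟪φ y, φ ystar - φ ymed⟫ = 0 := by
    rw [inner_sub_right, horthbad y (hbad y hy hy') ystar hy.symm,
      horthbad y (hbad y hy hy') ymed hy'.symm, sub_self]
  exact pos_inner_stuck_general φ rG rP ystar ymed ybad (ne_of_mem_of_not_mem hybad hsb)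
    (ne_of_mem_of_not_mem hybad hmb) hr1 hrG_le hlt hmin hmax horth (hs ▸ hchain2) θt hflow
    ((inner_gradient_sub_neg_iff horth hmin hmax hlt (θt 0)).2 (hs ▸ hscond))
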